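/- arXiv:2603.17276 — 2 statements merged into one kernel-verified Lean document; each statement's English description precedes it below -/
import Mathlib

section
/- Let A = (A,·,∘) be a finite skew brace with |A| ≥ 3 such that both groups (A,·) and (A,∘) are nilpotent. Then Aut(A) is non-trivial, i.e., there exists a bijection f : A → A with f ≠ id that is an automorphism of both (A,·) and (A,∘). -/
/-- A skew brace structure on a group `A` (whose given group operation `*` plays the
role of the "additive" operation `·`): a second group operation `circ` with the same
identity element `1`, satisfying the brace relation
`a ∘ (b · c) = (a ∘ b) · a⁻¹ · (a ∘ c)`. -/
structure SkewBraceStruct (A : Type*) [Group A] where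
  circ : A → A → A
  circInv : A → A
  circ_assoc : ∀ a b c, circ (circ a b) c = circ a (circ b c)
  one_circ : ∀ a, circ 1 a = a
  circ_one : ∀ a, circ a 1 = a
  circInv_circ : ∀ a, circ (circInv a) a = 1
  brace : ∀ a b c, circ a (b * c) = circ a b * a⁻¹ * circ a c

/-- `f` is an automorphism of the skew brace: a bijection that is an automorphism of
both `(A, ·)` and `(A, ∘)`. -/
def SkewBraceStruct.IsAut {A : Type*} [Group A] (S : SkewBraceStruct A) (f : A → A) : Prop :=
  Function.Bijective f ∧ (∀ a b, f (a * b) = f a * f b) ∧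
    (∀ a b, f (S.circ a b) = S.circ (f a) (f b))


/-- The multiplicative group `(A, ∘)` of a skew brace. -/
abbrev SkewBraceStruct.circGroup {A : Type*} [Group A] (S : SkewBraceStruct A) : Group A :=
  @Group.ofLeftAxioms A ⟨S.circ⟩ ⟨S.circInv⟩ ⟨1⟩ S.circ_assoc S.one_circ S.circInv_circ

/-!
Fix a prime `p` dividing `|A|` and write `|A| = p ^ k * m` with `p ∤ m`. Nilpotency splits both
groups into their `p ^ k`- and `m`-torsion, the two splittings have the same parts, and
`λ_a(b) = a⁻¹ · (a ∘ b)` is trivial between parts of coprime order. So `(A, ∘)` acts through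
`p`-groups on the `p`-part of `Z(A, ·)` and on `Hom((A, ·), ℤ/p)`; counting fixed points yields a
central `λ`-fixed element `z` of order `p` and a nontrivial `λ`-invariant `χ : A → ℤ/p`.

If `λ_z` is nontrivial, it is an automorphism. Otherwise `z` annihilates `A`, and
`a ↦ a · z ^ χ(a)` is an automorphism as soon as it does not kill `z`. For odd `p` this holds for
`χ` or for `χ⁻¹`; if `4 ∣ |A|` and `p = 2`, then `χ` can be chosen trivial on `z`.
-/

lemma smul_mem_center {G M : Type*} [Group G] [Group M] [MulDistribMulAction G M] (g : G)
    {x : M} (hx : x ∈ Subgroup.center M) : g • x ∈ Subgroup.center M := by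
  refine Subgroup.mem_center_iff.mpr fun a ↦ ?_
  rw [← smul_inv_smul g a, ← smul_mul', ← smul_mul', Subgroup.mem_center_iff.mp hx]

section CoprimeTorsion

variable {G : Type*} [Group G] {n m : ℕ}

lemma exists_mul_eq_of_card_eq_mul (hcard : Nat.card G = n * m) (hnm : n.Coprime m) (a : G) :
    ∃ x y : G, x ^ n = 1 ∧ y ^ m = 1 ∧ x * y = a := by
  have pow_card : a ^ ((n * m : ℕ) : ℤ) = 1 := by rw [zpow_natCast, ← hcard, pow_card_eq_one']
  have bezout : (m * n.gcdB m + n * n.gcdA m : ℤ) = 1 := by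
    rw [add_comm, ← Nat.gcd_eq_gcd_ab, hnm, Nat.cast_one]
  refine ⟨a ^ (m * n.gcdB m : ℤ), a ^ (n * n.gcdA m : ℤ), ?_, ?_, ?_⟩
  · rw [← zpow_natCast, ← zpow_mul,
      show (m * n.gcdB m * n : ℤ) = (n * m : ℕ) * n.gcdB m by push_cast; ring,
      zpow_mul, pow_card, one_zpow]
  · rw [← zpow_natCast, ← zpow_mul,
      show (n * n.gcdA m * m : ℤ) = (n * m : ℕ) * n.gcdA m by push_cast; ring,
      zpow_mul, pow_card, one_zpow]
  · rw [← zpow_add, bezout, zpow_one]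

variable [Finite G] [Group.IsNilpotent G]

lemma mul_pow_eq_one_of_card_eq_mul (hcard : Nat.card G = n * m) (hnm : n.Coprime m) {a b : G}
    (ha : a ^ n = 1) (hb : b ^ n = 1) : (a * b) ^ n = 1 := by
  obtain ⟨φ⟩ := (Group.isNilpotent_of_finite_tfae (G := G).out 0 4).mp ‹_›
  obtain ⟨x, rfl⟩ := φ.surjective a
  obtain ⟨y, rfl⟩ := φ.surjective b
  rw [← map_pow, EmbeddingLike.map_eq_one_iff] at ha hb
  rw [← map_mul, ← map_pow, EmbeddingLike.map_eq_one_iff]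
  funext q Q
  have : Fact (q : ℕ).Prime := ⟨Nat.prime_of_mem_primeFactors q.2⟩
  have hx : x q Q ^ n = 1 := congrFun (congrFun ha q) Q
  have hy : y q Q ^ n = 1 := congrFun (congrFun hb q) Q
  have card_dvd : Nat.card Q ∣ n ∨ Nat.card Q ∣ m := by
    rcases subsingleton_or_nontrivial Q with _ | _
    · simp
    · obtain ⟨j, hj, hQ⟩ := Q.isPGroup'.nontrivial_iff_card.mp ‹_›
      have hprime : IsPrimePow (Nat.card Q) := hQ ▸ this.out.isPrimePow.pow hj.ne'
      exact (hnm.isPrimePow_dvd_mul hprime).mp (hcard ▸ Subgroup.card_subgroup_dvd_card Q.1)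
  rcases card_dvd with hdvd | hdvd
  · exact orderOf_dvd_iff_pow_eq_one.mp ((orderOf_dvd_natCard (x q Q * y q Q)).trans hdvd)
  · have eq_one {w : Q} (hw : w ^ n = 1) : w = 1 := by
      have hw' : w ^ m = 1 :=
        orderOf_dvd_iff_pow_eq_one.mp ((orderOf_dvd_natCard w).trans hdvd)
      exact (pow_eq_one_iff_of_coprime hnm).mp ⟨hw, hw'⟩
    simp [eq_one hx, eq_one hy]

/-- The subgroup of elements killed by `n` in a finite nilpotent group of order `n * m`, with `n`
and `m` coprime. It is the product of the Sylow subgroups for the primes dividing `n`. -/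
def coprimeTorsion (hcard : Nat.card G = n * m) (hnm : n.Coprime m) : Subgroup G where
  carrier := {a | a ^ n = 1}
  one_mem' := one_pow n
  mul_mem' := mul_pow_eq_one_of_card_eq_mul hcard hnm
  inv_mem' {a} (ha : a ^ n = 1) := show a⁻¹ ^ n = 1 by rw [inv_pow, ha, inv_one]

lemma mem_coprimeTorsion {hcard : Nat.card G = n * m} {hnm : n.Coprime m} {a : G} :
    a ∈ coprimeTorsion hcard hnm ↔ a ^ n = 1 :=
  Iff.rfl

instance normal_coprimeTorsion (hcard : Nat.card G = n * m) (hnm : n.Coprime m) :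
    (coprimeTorsion hcard hnm).Normal where
  conj_mem a ha g := by
    rw [mem_coprimeTorsion] at ha ⊢
    rw [conj_pow, ha, mul_one, mul_inv_cancel]

lemma smul_mem_coprimeTorsion {H : Type*} [Group H] [MulDistribMulAction H G]
    (hcard : Nat.card G = n * m) (hnm : n.Coprime m) (h : H) {a : G}
    (ha : a ∈ coprimeTorsion hcard hnm) : h • a ∈ coprimeTorsion hcard hnm := by
  rw [mem_coprimeTorsion] at ha ⊢
  rw [← smul_pow', ha, smul_one]

lemma card_coprimeTorsion_dvd (hcard : Nat.card G = n * m) (hnm : n.Coprime m) :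
    Nat.card (coprimeTorsion hcard hnm) ∣ n := by
  have coprime : (Nat.card (coprimeTorsion hcard hnm)).Coprime m := by
    refine Nat.coprime_of_dvd fun q hq hdvd hqm ↦ ?_
    have : Fact q.Prime := ⟨hq⟩
    obtain ⟨x, hx⟩ := exists_prime_orderOf_dvd_card' q hdvd
    have hqn : q ∣ n := hx ▸ orderOf_dvd_of_pow_eq_one (Subtype.ext x.2)
    exact hq.one_lt.ne' (Nat.dvd_one.mp (hnm ▸ Nat.dvd_gcd hqn hqm))
  exact coprime.dvd_of_dvd_mul_right (hcard ▸ Subgroup.card_subgroup_dvd_card _)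

lemma commute_of_pow_eq_one_of_coprime (hcard : Nat.card G = n * m) (hnm : n.Coprime m) {a b : G}
    (ha : a ^ n = 1) (hb : b ^ m = 1) : Commute a b := by
  have hcard' : Nat.card G = m * n := by rw [hcard, mul_comm]
  refine Subgroup.commute_of_normal_of_disjoint (coprimeTorsion hcard hnm)
    (coprimeTorsion hcard' hnm.symm) inferInstance inferInstance ?_ a b ha hb
  exact Subgroup.disjoint_def.mpr fun hx hy ↦ (pow_eq_one_iff_of_coprime hnm).mp ⟨hx, hy⟩

end CoprimeTorsion

section PrimePart

variable {G : Type*} [Group G] {p k m : ℕ}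

lemma isPGroup_coprimeTorsion [Finite G] [Group.IsNilpotent G] (hcard : Nat.card G = p ^ k * m)
    (hpm : (p ^ k).Coprime m) : IsPGroup p (coprimeTorsion hcard hpm) :=
  fun x ↦ ⟨k, Subtype.ext x.2⟩

variable [hp : Fact p.Prime]

lemma exists_eq_prime_pow_mul_coprime {N : ℕ} (hN : N ≠ 0) (hpN : p ∣ N) :
    ∃ k m, k ≠ 0 ∧ (p ^ k).Coprime m ∧ N = p ^ k * m := by
  obtain ⟨k, m, hpm, rfl⟩ := Nat.exists_eq_pow_mul_and_not_dvd hN p hp.out.ne_one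
  refine ⟨k, m, ?_, (hp.out.coprime_iff_not_dvd.mpr hpm).pow_left k, rfl⟩
  rintro rfl
  exact hpm (by simpa using hpN)

lemma exists_ne_one_forall_smul_eq {M : Type*} [Group M] [MulDistribMulAction G M]
    (H : Subgroup M) [Finite H] [Nontrivial H] (hH : IsPGroup p H)
    (stable : ∀ g : G, ∀ x ∈ H, g • x ∈ H)
    (pow_smul : ∀ g : G, ∀ x ∈ H, g ^ p ^ k • x = x) :
    ∃ x ∈ H, x ≠ 1 ∧ ∀ g : G, g • x = x := by
  let X : SubMulAction G M := ⟨H, fun g {x} hx ↦ stable g x hx⟩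
  have isPGroup_range : IsPGroup p (MulAction.toPermHom G X).range := by
    intro σ
    obtain ⟨g, rfl⟩ := (MulAction.toPermHom G X).rangeRestrict_surjective σ
    refine ⟨k, Subtype.ext (Equiv.ext fun x ↦ Subtype.ext ?_)⟩
    rw [← map_pow]
    exact pow_smul g x x.2
  have dvd_card : p ∣ Nat.card X :=
    hH.card_eq_or_dvd.resolve_left (Finite.one_lt_card (α := H)).ne'
  obtain ⟨x, fixed, ne⟩ :=
    isPGroup_range.exists_fixed_point_of_prime_dvd_card_of_fixed_point X dvd_card
      (a := ⟨1, H.one_mem⟩) (by rintro ⟨_, g, rfl⟩; exact Subtype.ext (smul_one g))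
  exact ⟨x, x.2, fun h ↦ ne (Subtype.ext h.symm),
    fun g ↦ congrArg Subtype.val (fixed ⟨_, g, rfl⟩)⟩

lemma monoidHom_zmod_apply_eq_one (hpm : p.Coprime m) (χ : G →* Multiplicative (ZMod p)) {a : G}
    (ha : a ^ m = 1) : χ a = 1 := by
  refine (pow_eq_one_iff_of_coprime hpm).mp ⟨?_, by rw [← map_pow, ha, map_one]⟩
  simpa using pow_card_eq_one' (x := χ a)

variable [Finite G]

lemma exists_monoidHom_zmod_ne_one_of_isPGroup [Nontrivial G] (hG : IsPGroup p G) :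
    ∃ χ : G →* Multiplicative (ZMod p), χ ≠ 1 := by
  obtain ⟨n, hn, hcard⟩ := hG.nontrivial_iff_card.mp ‹_›
  obtain ⟨K, hK⟩ := Sylow.exists_subgroup_card_pow_prime (G := G) p
    (hcard ▸ pow_dvd_pow p (Nat.sub_le n 1))
  have index_eq : K.index = p := by
    refine Nat.eq_of_mul_eq_mul_left (pow_pos hp.out.pos (n - 1)) ?_
    rw [← hK, K.card_mul_index, hcard, hK, pow_sub_one_mul hn.ne']
  have : K.Normal := Subgroup.normal_of_index_eq_minFac_card <| by
    rw [index_eq, hcard, hp.out.pow_minFac hn.ne']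
  let e : G ⧸ K ≃* Multiplicative (ZMod p) := mulEquivOfPrimeCardEq (p := p) index_eq (by simp)
  refine ⟨e.toMonoidHom.comp (QuotientGroup.mk' K), fun h ↦ ?_⟩
  have eq_top : K = ⊤ := by
    refine eq_top_iff.mpr fun x _ ↦ ?_
    simpa using DFunLike.congr_fun h x
  exact hp.out.ne_one (by rw [← index_eq, eq_top, Subgroup.index_top])

variable [Group.IsNilpotent G]

lemma nontrivial_coprimeTorsion (hcard : Nat.card G = p ^ k * m) (hpm : (p ^ k).Coprime m)
    (hk : k ≠ 0) : Nontrivial (coprimeTorsion hcard hpm) := by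
  obtain ⟨x, hx⟩ := exists_prime_orderOf_dvd_card' (G := G) p
    (hcard ▸ (dvd_pow_self p hk).mul_right m)
  have mem : x ∈ coprimeTorsion hcard hpm :=
    orderOf_dvd_iff_pow_eq_one.mp (hx ▸ dvd_pow_self p hk)
  refine Subgroup.nontrivial_iff_exists_ne_one _ |>.mpr ⟨x, mem, ?_⟩
  rintro rfl
  exact hp.out.ne_one (hx.symm.trans orderOf_one)

lemma nontrivial_center_inf_coprimeTorsion (hcard : Nat.card G = p ^ k * m)
    (hpm : (p ^ k).Coprime m) (hk : k ≠ 0) :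
    Nontrivial (Subgroup.center G ⊓ coprimeTorsion hcard hpm : Subgroup G) := by
  have := nontrivial_coprimeTorsion hcard hpm hk
  obtain ⟨x, hx, hx1, fixed⟩ := exists_ne_one_forall_smul_eq (G := ConjAct G) (k := k)
    (coprimeTorsion hcard hpm) (isPGroup_coprimeTorsion hcard hpm)
    (fun g x hx ↦ (normal_coprimeTorsion hcard hpm).conj_mem x hx (ConjAct.ofConjAct g))
    (fun g x hx ↦ by
      have pow_card : (ConjAct.ofConjAct g ^ p ^ k) ^ m = 1 := by
        rw [← pow_mul, ← hcard, pow_card_eq_one']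
      rw [ConjAct.smul_def, map_pow, ← (commute_of_pow_eq_one_of_coprime hcard hpm hx pow_card).eq,
        mul_inv_cancel_right])
  refine Subgroup.nontrivial_iff_exists_ne_one _ |>.mpr ⟨x, ⟨?_, hx⟩, hx1⟩
  exact Subgroup.mem_center_iff.mpr fun g ↦
    mul_inv_eq_iff_eq_mul.mp (fixed (ConjAct.toConjAct g))

lemma exists_monoidHom_zmod_ne_one (hpG : p ∣ Nat.card G) :
    ∃ χ : G →* Multiplicative (ZMod p), χ ≠ 1 := by
  obtain ⟨k, m, hk, hpm, hcard⟩ := exists_eq_prime_pow_mul_coprime Nat.card_pos.ne' hpG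
  let Q := coprimeTorsion (hcard.trans (mul_comm _ _)) hpm.symm
  have isPGroup_quotient : IsPGroup p (G ⧸ Q) := by
    intro a
    obtain ⟨a, rfl⟩ := QuotientGroup.mk_surjective a
    refine ⟨k, (QuotientGroup.eq_one_iff _).mpr ?_⟩
    rw [mem_coprimeTorsion, ← pow_mul, ← hcard, pow_card_eq_one']
  have : Nontrivial (G ⧸ Q) := by
    refine QuotientGroup.nontrivial_iff.mpr fun eq_top ↦ ?_
    have := nontrivial_coprimeTorsion hcard hpm hk
    obtain ⟨x, hx, hx1⟩ := (Subgroup.nontrivial_iff_exists_ne_one (coprimeTorsion hcard hpm)).mp ‹_›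
    have hxQ : x ∈ Q := eq_top ▸ Subgroup.mem_top x
    exact hx1 ((pow_eq_one_iff_of_coprime hpm).mp ⟨hx, hxQ⟩)
  obtain ⟨χ, hχ⟩ := exists_monoidHom_zmod_ne_one_of_isPGroup isPGroup_quotient
  refine ⟨χ.comp (QuotientGroup.mk' Q), fun h ↦ hχ ?_⟩
  ext1
  simpa using h

end PrimePart

namespace SkewBraceStruct

variable {A : Type*} [Group A] (S : SkewBraceStruct A)

/-- A copy of `A` carrying the group structure `∘` as an instance. -/
def Circ (_S : SkewBraceStruct A) : Type _ := A

instance : Group S.Circ := S.circGroup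

instance [Finite A] : Finite S.Circ := ‹Finite A›

/-- The identity map from `A` to its copy `S.Circ`. -/
def toCirc : A ≃ S.Circ := Equiv.refl A

lemma toCirc_circ (a b : A) : S.toCirc (S.circ a b) = S.toCirc a * S.toCirc b := rfl

lemma toCirc_one : S.toCirc 1 = 1 := rfl

/-- The action `λ` of `(A, ∘)` on `(A, ·)` by automorphisms, `λ_a(b) = a⁻¹ · (a ∘ b)`. -/
instance : MulDistribMulAction S.Circ A where
  smul g b := (S.toCirc.symm g)⁻¹ * S.circ (S.toCirc.symm g) b
  one_smul b := show 1⁻¹ * S.circ 1 b = b by rw [inv_one, one_mul, S.one_circ]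
  mul_smul g h b := by
    obtain ⟨a, rfl⟩ := S.toCirc.surjective g
    obtain ⟨c, rfl⟩ := S.toCirc.surjective h
    change (S.circ a c)⁻¹ * S.circ (S.circ a c) b = a⁻¹ * S.circ a (c⁻¹ * S.circ c b)
    have circ_circ := S.brace a c (c⁻¹ * S.circ c b)
    rw [mul_inv_cancel_left, ← S.circ_assoc] at circ_circ
    rw [circ_circ]
    group
  smul_mul g b c := by
    change _⁻¹ * S.circ _ (b * c) = _⁻¹ * S.circ _ b * (_⁻¹ * S.circ _ c)
    rw [S.brace]
    group
  smul_one g := show _⁻¹ * S.circ _ 1 = 1 by rw [S.circ_one, inv_mul_cancel]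

lemma circ_eq (a b : A) : S.circ a b = a * S.toCirc a • b :=
  (mul_inv_cancel_left a _).symm

/-- A `λ`-invariant subgroup of `(A, ·)` is also a subgroup of `(A, ∘)`. -/
def circSubgroup (H : Subgroup A) (stable : ∀ g : S.Circ, ∀ x ∈ H, g • x ∈ H) :
    Subgroup S.Circ where
  carrier := S.toCirc.symm ⁻¹' H
  one_mem' := H.one_mem
  mul_mem' {g h} hg hh := by
    obtain ⟨a, rfl⟩ := S.toCirc.surjective g
    obtain ⟨b, rfl⟩ := S.toCirc.surjective h
    rw [← S.toCirc_circ, circ_eq]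
    exact H.mul_mem hg (stable _ _ hh)
  inv_mem' {g} hg := by
    obtain ⟨a, rfl⟩ := S.toCirc.surjective g
    have inv_eq : S.toCirc.symm (S.toCirc a)⁻¹ = ((S.toCirc a)⁻¹ • a)⁻¹ := by
      refine eq_inv_of_mul_eq_one_left ?_
      exact (S.circ_eq _ a).symm.trans (S.circInv_circ a)
    exact Set.mem_preimage.mpr (inv_eq ▸ H.inv_mem (stable _ _ hg))

section CoprimeTorsion

variable [Finite A] [Group.IsNilpotent A] {n m : ℕ}

lemma toCirc_pow_eq_one (hcard : Nat.card A = n * m) (hnm : n.Coprime m) {a : A}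
    (ha : a ^ n = 1) : S.toCirc a ^ n = 1 := by
  let H := S.circSubgroup (coprimeTorsion hcard hnm) fun g _ ↦ smul_mem_coprimeTorsion hcard hnm g
  have order_dvd : orderOf (S.toCirc a) ∣ Nat.card H := H.orderOf_dvd_natCard ha
  exact orderOf_dvd_iff_pow_eq_one.mp (order_dvd.trans (card_coprimeTorsion_dvd hcard hnm))

variable [Group.IsNilpotent S.Circ]

lemma toCirc_smul_eq_self (hcard : Nat.card A = n * m) (hnm : n.Coprime m) {a b : A}
    (ha : a ^ n = 1) (hb : b ^ m = 1) : S.toCirc a • b = b := by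
  have hcard' : Nat.card A = m * n := by rw [hcard, mul_comm]
  have hab : (S.toCirc a • b) ^ m = 1 := smul_mem_coprimeTorsion hcard' hnm.symm _ hb
  have hba : (S.toCirc b • a) ^ n = 1 := smul_mem_coprimeTorsion hcard hnm _ ha
  have circ_comm : a * S.toCirc a • b = S.toCirc b • a * b := by
    rw [(commute_of_pow_eq_one_of_coprime hcard hnm hba hb).eq, ← S.circ_eq, ← S.circ_eq]
    exact commute_of_pow_eq_one_of_coprime (G := S.Circ) hcard hnm
      (S.toCirc_pow_eq_one hcard hnm ha) (S.toCirc_pow_eq_one hcard' hnm.symm hb)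
  have parts_eq : (S.toCirc b • a)⁻¹ * a = b * (S.toCirc a • b)⁻¹ := by
    rw [inv_mul_eq_iff_eq_mul, ← mul_assoc, ← circ_comm, mul_inv_cancel_right]
  have part_eq_one : b * (S.toCirc a • b)⁻¹ = 1 := by
    refine (pow_eq_one_iff_of_coprime hnm).mp ⟨?_, ?_⟩
    · rw [← parts_eq]
      exact (coprimeTorsion hcard hnm).mul_mem (inv_mem hba) ha
    · exact (coprimeTorsion hcard' hnm.symm).mul_mem hb (inv_mem hab)
  exact (mul_inv_eq_one.mp part_eq_one).symm

lemma pow_eq_one_of_toCirc_pow_eq_one (hcard : Nat.card A = n * m) (hnm : n.Coprime m) {a : A}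
    (ha : S.toCirc a ^ n = 1) : a ^ n = 1 := by
  have hcard' : Nat.card A = m * n := by rw [hcard, mul_comm]
  obtain ⟨x, y, hx, hy, rfl⟩ := exists_mul_eq_of_card_eq_mul hcard hnm a
  have circ_xy : S.toCirc (x * y) = S.toCirc x * S.toCirc y := by
    rw [← S.toCirc_circ, S.circ_eq, S.toCirc_smul_eq_self hcard hnm hx hy]
  have hx' := S.toCirc_pow_eq_one hcard hnm hx
  have hy' := S.toCirc_pow_eq_one hcard' hnm.symm hy
  have hy1 : S.toCirc y = 1 := by
    refine (pow_eq_one_iff_of_coprime hnm).mp ⟨?_, hy'⟩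
    have comm : Commute (S.toCirc x) (S.toCirc y) :=
      commute_of_pow_eq_one_of_coprime (G := S.Circ) hcard hnm hx' hy'
    rwa [circ_xy, comm.mul_pow, hx', one_mul] at ha
  rw [S.toCirc.injective (hy1.trans S.toCirc_one.symm), mul_one, hx]

lemma pow_smul_eq_self (hcard : Nat.card A = n * m) (hnm : n.Coprime m) (g : S.Circ) {a : A}
    (ha : a ^ n = 1) : g ^ n • a = a := by
  have hcard' : Nat.card A = m * n := by rw [hcard, mul_comm]
  obtain ⟨b, hb⟩ := S.toCirc.surjective (g ^ n)
  have pow_card : S.toCirc b ^ m = 1 := by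
    rw [hb, ← pow_mul, ← hcard]
    exact pow_card_eq_one' (G := S.Circ)
  rw [← hb]
  exact S.toCirc_smul_eq_self hcard' hnm.symm
    (S.pow_eq_one_of_toCirc_pow_eq_one hcard' hnm.symm pow_card) ha

end CoprimeTorsion

section PrimePart

variable [Finite A] [Group.IsNilpotent A] [Group.IsNilpotent S.Circ] {p : ℕ} [hp : Fact p.Prime]

lemma map_pow_smul_eq {k m : ℕ} (hcard : Nat.card A = p ^ k * m) (hpm : p.Coprime m)
    (χ : A →* Multiplicative (ZMod p)) (g : S.Circ) (a : A) : χ (g ^ p ^ k • a) = χ a := by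
  obtain ⟨x, y, hx, hy, rfl⟩ := exists_mul_eq_of_card_eq_mul hcard (hpm.pow_left k) a
  have hy' : (g ^ p ^ k • y) ^ m = 1 := by rw [← smul_pow', hy, smul_one]
  rw [smul_mul', S.pow_smul_eq_self hcard (hpm.pow_left k) g hx, map_mul, map_mul,
    monoidHom_zmod_apply_eq_one hpm χ hy', monoidHom_zmod_apply_eq_one hpm χ hy]

lemma exists_invariant_monoidHom_zmod_ne_one (N : Subgroup A) [N.Normal]
    (stable : ∀ g : S.Circ, ∀ x ∈ N, g • x ∈ N) (hpN : p ∣ N.index) :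
    ∃ χ : A →* Multiplicative (ZMod p),
      χ ≠ 1 ∧ (∀ x ∈ N, χ x = 1) ∧ ∀ (g : S.Circ) (a : A), χ (g • a) = χ a := by
  have : Finite (A →* Multiplicative (ZMod p)) := Finite.of_injective _ DFunLike.coe_injective
  let H : Subgroup (A →* Multiplicative (ZMod p)) := (MonoidHom.compHom' N.subtype).ker
  have mem_H {χ : A →* Multiplicative (ZMod p)} : χ ∈ H ↔ ∀ x ∈ N, χ x = 1 := by
    simp [H, MonoidHom.mem_ker, MonoidHom.ext_iff]
  have isPGroup_H : IsPGroup p H := by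
    refine IsPGroup.to_subgroup (fun χ ↦ ⟨1, MonoidHom.ext fun a ↦ ?_⟩) H
    simpa using pow_card_eq_one' (x := χ a)
  have : Nontrivial H := by
    obtain ⟨χ, hχ⟩ := exists_monoidHom_zmod_ne_one (G := A ⧸ N) hpN
    refine H.nontrivial_iff_exists_ne_one.mpr ⟨χ.comp (QuotientGroup.mk' N), ?_, fun h ↦ hχ ?_⟩
    · exact mem_H.mpr fun x hx ↦ by simp [(QuotientGroup.eq_one_iff x).mpr hx]
    · ext1
      simpa using h
  obtain ⟨k, m, hk, hpm, hcard⟩ := exists_eq_prime_pow_mul_coprime Nat.card_pos.ne'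
    (hpN.trans N.index_dvd_card)
  obtain ⟨χ, hχN, hχ, fixed⟩ := exists_ne_one_forall_smul_eq (G := S.Circᵈᵐᵃ) (k := k) H isPGroup_H
    (fun g χ hχ ↦ mem_H.mpr fun x hx ↦ mem_H.mp hχ _ (stable _ x hx))
    (fun g χ _ ↦ MonoidHom.ext fun a ↦
      S.map_pow_smul_eq hcard (hpm.coprime_dvd_left (dvd_pow_self p hk)) χ (DomMulAct.mk.symm g) a)
  exact ⟨χ, hχ, mem_H.mp hχN, fun g a ↦ DFunLike.congr_fun (fixed (DomMulAct.mk g)) a⟩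

end PrimePart

/-- The central elements of `(A, ·)` that are fixed by `λ`. -/
def fixCenter : Subgroup A := Subgroup.center A ⊓ FixedPoints.subgroup S.Circ A

variable {S} in
lemma smul_eq_of_mem_fixCenter {z : A} (hz : z ∈ S.fixCenter) (g : S.Circ) : g • z = z :=
  hz.2 g

variable {S} in
lemma commute_of_mem_fixCenter {z : A} (hz : z ∈ S.fixCenter) (a : A) : Commute a z :=
  Subgroup.mem_center_iff.mp hz.1 a

lemma exists_mem_fixCenter_orderOf_eq [Finite A] [Group.IsNilpotent A] [Group.IsNilpotent S.Circ]
    {p : ℕ} [Fact p.Prime] (hpA : p ∣ Nat.card A) : ∃ z ∈ S.fixCenter, orderOf z = p := by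
  obtain ⟨k, m, hk, hpm, hcard⟩ := exists_eq_prime_pow_mul_coprime Nat.card_pos.ne' hpA
  have := nontrivial_center_inf_coprimeTorsion hcard hpm hk
  have isPGroup_P := isPGroup_coprimeTorsion hcard hpm
  obtain ⟨x, hx, hx1, fixed⟩ := exists_ne_one_forall_smul_eq (G := S.Circ) (k := k)
    (Subgroup.center A ⊓ coprimeTorsion hcard hpm) (isPGroup_P.to_le inf_le_right)
    (fun g x hx ↦ ⟨smul_mem_center g hx.1, smul_mem_coprimeTorsion hcard hpm g hx.2⟩)
    (fun g x hx ↦ S.pow_smul_eq_self hcard hpm g hx.2)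
  have dvd_orderOf : p ∣ orderOf x := by
    have : (⟨x, hx.2⟩ : coprimeTorsion hcard hpm) ≠ 1 := fun h ↦ hx1 (congrArg Subtype.val h)
    simpa using isPGroup_P.dvd_orderOf this
  have hx_fix : x ∈ S.fixCenter := ⟨hx.1, fixed⟩
  exact ⟨x ^ (orderOf x / p), pow_mem hx_fix _,
    orderOf_pow_orderOf_div (orderOf_pos x).ne' dvd_orderOf⟩

lemma isAut_toCirc_smul {z : A} (hz : z ∈ S.fixCenter) : S.IsAut (S.toCirc z • ·) := by
  refine ⟨MulAction.bijective _, smul_mul' _, fun a b ↦ ?_⟩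
  have circ_comm : S.toCirc z * S.toCirc a = S.toCirc (S.toCirc z • a) * S.toCirc z := by
    rw [← S.toCirc_circ, ← S.toCirc_circ, S.circ_eq, S.circ_eq, smul_eq_of_mem_fixCenter hz,
      (commute_of_mem_fixCenter hz _).eq]
  beta_reduce
  rw [S.circ_eq, smul_mul', S.circ_eq, ← mul_smul, circ_comm, mul_smul]

/-- The annihilator of the skew brace: the central `λ`-fixed elements `z` with `λ_z = id`. -/
def annihilator : Subgroup A where
  carrier := {z | z ∈ S.fixCenter ∧ ∀ a : A, S.toCirc z • a = a}
  one_mem' := ⟨one_mem _, fun a ↦ by rw [S.toCirc_one, one_smul]⟩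
  mul_mem' := by
    rintro y z ⟨hy, hy'⟩ ⟨hz, hz'⟩
    refine ⟨mul_mem hy hz, fun a ↦ ?_⟩
    have circ_yz : S.circ y z = y * z := by rw [S.circ_eq, hy']
    rw [← circ_yz, S.toCirc_circ, mul_smul, hz', hy']
  inv_mem' := by
    rintro z ⟨hz, hz'⟩
    refine ⟨inv_mem hz, fun a ↦ ?_⟩
    have circ_inv : S.circ z z⁻¹ = 1 := by rw [S.circ_eq, hz', mul_inv_cancel]
    rw [← hz' (S.toCirc z⁻¹ • a), ← mul_smul, ← S.toCirc_circ, circ_inv, S.toCirc_one, one_smul]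

lemma isAut_mul_map [Finite A] (ψ : A →* A) (mem : ∀ a, ψ a ∈ S.annihilator)
    (invariant : ∀ (g : S.Circ) (a : A), ψ (g • a) = ψ a) (inj : ∀ a, a * ψ a = 1 → a = 1) :
    S.IsAut (fun a ↦ a * ψ a) := by
  have comm (a b : A) : Commute b (ψ a) := commute_of_mem_fixCenter (mem a).1 b
  let F : A →* A :=
    { toFun a := a * ψ a
      map_one' := by rw [map_one, mul_one]
      map_mul' a b := by rw [map_mul, (comm a b).symm.mul_mul_mul_comm] }
  have F_inj : Function.Injective F := (injective_iff_map_eq_one F).mpr inj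
  refine ⟨Finite.injective_iff_bijective.mp F_inj, map_mul F, fun a b ↦ ?_⟩
  have smul_F : S.toCirc (a * ψ a) • (b * ψ b) = S.toCirc a • b * ψ b := by
    have circ_ψ : S.circ a (ψ a) = a * ψ a := by
      rw [S.circ_eq, smul_eq_of_mem_fixCenter (mem a).1]
    rw [← circ_ψ, S.toCirc_circ, mul_smul, (mem a).2, smul_mul',
      smul_eq_of_mem_fixCenter (mem b).1]
  beta_reduce
  rw [S.circ_eq, S.circ_eq, smul_F, map_mul, invariant,
    ((comm a (S.toCirc a • b)).symm).mul_mul_mul_comm]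

section PrimeOrder

variable [Finite A] {p : ℕ} [hp : Fact p.Prime]

lemma exists_isAut_ne_id_of_mem_annihilator {z : A} (hz : z ∈ S.annihilator) (hzp : orderOf z = p)
    {ψ : A →* Subgroup.zpowers z} (hψ : ψ ≠ 1)
    (invariant : ∀ (g : S.Circ) (a : A), ψ (g • a) = ψ a) (hψz : z * ψ z ≠ 1) :
    ∃ f : A → A, S.IsAut f ∧ f ≠ id := by
  have zpowers_le : Subgroup.zpowers z ≤ S.annihilator := Subgroup.zpowers_le.mpr hz
  have comm (a : A) : Commute a (ψ a) := commute_of_mem_fixCenter (zpowers_le (ψ a).2).1 a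
  have order_eq : orderOf (z * ψ z) = p := by
    have hzp' : z ^ p = 1 := hzp ▸ pow_orderOf_eq_one z
    refine orderOf_eq_prime ?_ hψz
    rw [(comm z).mul_pow, ← Subgroup.coe_pow, ← map_pow, hzp', map_one, Subgroup.coe_one, mul_one]
  have inj (a : A) (ha : a * ψ a = 1) : a = 1 := by
    have ha_mem : a ∈ Subgroup.zpowers z := eq_inv_of_mul_eq_one_left ha ▸ inv_mem (ψ a).2
    obtain ⟨i, rfl⟩ := Subgroup.mem_zpowers_iff.mp ha_mem
    rw [map_zpow, Subgroup.coe_zpow, ← (comm z).mul_zpow] at ha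
    rw [← orderOf_dvd_iff_zpow_eq_one] at ha ⊢
    rwa [hzp, ← order_eq]
  refine ⟨_, S.isAut_mul_map ((Subgroup.zpowers z).subtype.comp ψ) (fun a ↦ zpowers_le (ψ a).2)
    (fun g a ↦ congrArg Subtype.val (invariant g a)) inj, fun h ↦ hψ ?_⟩
  exact MonoidHom.ext fun a ↦ Subtype.ext (mul_eq_left.mp (congrFun h a))

variable [Group.IsNilpotent A] [Group.IsNilpotent S.Circ]

lemma exists_isAut_ne_id_or_exists_mem_annihilator (hpA : p ∣ Nat.card A) :
    (∃ f : A → A, S.IsAut f ∧ f ≠ id) ∨ ∃ z ∈ S.annihilator, orderOf z = p := by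
  obtain ⟨z, hz, hzp⟩ := S.exists_mem_fixCenter_orderOf_eq hpA
  by_cases trivial_smul : ∀ a : A, S.toCirc z • a = a
  · exact Or.inr ⟨z, ⟨hz, trivial_smul⟩, hzp⟩
  · exact Or.inl ⟨_, S.isAut_toCirc_smul hz, fun h ↦ trivial_smul (congrFun h)⟩

lemma exists_invariant_monoidHom_zpowers_ne_one {z : A} (hzp : orderOf z = p) (N : Subgroup A)
    [N.Normal] (stable : ∀ g : S.Circ, ∀ x ∈ N, g • x ∈ N) (hpN : p ∣ N.index) :
    ∃ ψ : A →* Subgroup.zpowers z,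
      ψ ≠ 1 ∧ (∀ x ∈ N, ψ x = 1) ∧ ∀ (g : S.Circ) (a : A), ψ (g • a) = ψ a := by
  obtain ⟨χ, hχ, hχN, invariant⟩ := S.exists_invariant_monoidHom_zmod_ne_one N stable hpN
  let e : Multiplicative (ZMod p) ≃* Subgroup.zpowers z :=
    mulEquivOfPrimeCardEq (p := p) (by simp) (by rw [Nat.card_zpowers, hzp])
  refine ⟨e.toMonoidHom.comp χ, fun h ↦ hχ ?_, fun x hx ↦ ?_, fun g a ↦ ?_⟩
  · exact MonoidHom.ext fun a ↦ e.map_eq_one_iff.mp (DFunLike.congr_fun h a)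
  · exact e.map_eq_one_iff.mpr (hχN x hx)
  · exact congrArg e (invariant g a)

end PrimeOrder

variable [Finite A] [Group.IsNilpotent A] [Group.IsNilpotent S.Circ]

open scoped IsMulCommutative in
lemma exists_isAut_ne_id_of_odd_prime_dvd_card {p : ℕ} [hp : Fact p.Prime] (hodd : Odd p)
    (hpA : p ∣ Nat.card A) : ∃ f : A → A, S.IsAut f ∧ f ≠ id := by
  obtain haut | ⟨z, hz, hzp⟩ := S.exists_isAut_ne_id_or_exists_mem_annihilator hpA
  · exact haut
  obtain ⟨ψ, hψ, -, invariant⟩ := S.exists_invariant_monoidHom_zpowers_ne_one hzp ⊥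
    (fun g x hx ↦ by rw [Subgroup.mem_bot] at hx ⊢; rw [hx, smul_one])
    (by rwa [Subgroup.index_bot])
  by_cases hψz : z * ψ z = 1
  · have hz_sq : z * z ≠ 1 := fun h ↦ by
      have hp2 : p ∣ 2 := hzp ▸ orderOf_dvd_of_pow_eq_one (by rw [sq, h])
      exact Nat.not_odd_iff_even.mpr even_two
        ((Nat.prime_dvd_prime_iff_eq hp.out Nat.prime_two).mp hp2 ▸ hodd)
    refine S.exists_isAut_ne_id_of_mem_annihilator hz hzp (ψ := ψ⁻¹) (inv_ne_one.mpr hψ)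
      (fun g a ↦ congrArg (·⁻¹) (invariant g a)) ?_
    rwa [MonoidHom.inv_apply, Subgroup.coe_inv, ← eq_inv_of_mul_eq_one_left hψz]
  · exact S.exists_isAut_ne_id_of_mem_annihilator hz hzp hψ invariant hψz

lemma exists_isAut_ne_id_of_four_dvd_card (h4 : 4 ∣ Nat.card A) :
    ∃ f : A → A, S.IsAut f ∧ f ≠ id := by
  obtain haut | ⟨z, hz, hz2⟩ := S.exists_isAut_ne_id_or_exists_mem_annihilator (p := 2)
    (dvd_trans (by norm_num) h4)
  · exact haut
  have zpowers_le : Subgroup.zpowers z ≤ S.fixCenter := Subgroup.zpowers_le.mpr hz.1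
  have : (Subgroup.zpowers z).Normal := ⟨fun x hx g ↦ by
    rwa [(commute_of_mem_fixCenter (zpowers_le hx) g).eq, mul_inv_cancel_right]⟩
  have index_even : 2 ∣ (Subgroup.zpowers z).index := by
    rw [← (Subgroup.zpowers z).card_mul_index, Nat.card_zpowers, hz2] at h4
    exact Nat.dvd_of_mul_dvd_mul_left two_pos h4
  obtain ⟨ψ, hψ, hψz, invariant⟩ := S.exists_invariant_monoidHom_zpowers_ne_one hz2
    (Subgroup.zpowers z)
    (fun g x hx ↦ by rwa [smul_eq_of_mem_fixCenter (zpowers_le hx)]) index_even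
  refine S.exists_isAut_ne_id_of_mem_annihilator hz hz2 hψ invariant ?_
  rw [hψz z (Subgroup.mem_zpowers z), Subgroup.coe_one, mul_one]
  rintro rfl
  simp at hz2

end SkewBraceStruct

/-- A finite skew brace of order at least `3` whose additive and multiplicative groups
are both nilpotent has a non-trivial automorphism group. -/
theorem nilpotent_aut_nontrivial {A : Type*} [Group A] [Finite A] (S : SkewBraceStruct A)
    (hcard : 3 ≤ Nat.card A)
    (hnil_dot : Group.IsNilpotent A)
    (hnil_circ : @Group.IsNilpotent A S.circGroup) :
    ∃ f : A → A, S.IsAut f ∧ f ≠ id := by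
  have : Group.IsNilpotent S.Circ := hnil_circ
  obtain h4 | ⟨p, hp, hpA, hodd⟩ := Nat.four_dvd_or_exists_odd_prime_and_dvd_of_two_lt hcard
  · exact S.exists_isAut_ne_id_of_four_dvd_card h4
  · have : Fact p.Prime := ⟨hp⟩
    exact S.exists_isAut_ne_id_of_odd_prime_dvd_card hodd hpA
end

section
/- For every odd prime p, there exists a skew brace A = (A,·,∘) with |A| = 2p³ whose automorphism group is trivial; that is, the only bijection A → A that is an automorphism of both (A,·) and (A,∘) is the identity map. -/
/-!
Let `2` be invertible in the commutative ring `R`. The skew brace lives on the Heisenberg group of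
`R` extended by a sign that negates the coordinates `b` and `c`. Its circle operation is
`x ∘ y = x * lambda x y`, where `lambda x` is a reflection depending on the sign of `x` followed by
conjugation by an element `twist x`; that this is a skew brace amounts to `twist` being a cocycle.

An automorphism preserves signs, since the elements of sign `1` are the squares. Relations that
single out the coordinate subgroups and the involution `(0, 0, 0, -1)` then force it to act
coordinatewise, through additive maps, and the values of `lambda` on coordinate elements force these
maps to be one and the same ring endomorphism of `R`. For `R = ZMod n` the only one is the identity.
-/

namespace SkewBraceStruct

variable {A : Type*} [Group A] {lam : A → MulAut A}

theorem lam_one (hlam : ∀ a b, lam (a * lam a b) = lam a * lam b) : lam 1 = 1 := by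
  have h := hlam 1 1
  rwa [map_one, mul_one, left_eq_mul] at h

theorem lam_inv_apply_inv (hlam : ∀ a b, lam (a * lam a b) = lam a * lam b) (a : A) :
    lam ((lam a)⁻¹ a⁻¹) = (lam a)⁻¹ := by
  have h := hlam a ((lam a)⁻¹ a⁻¹)
  rw [MulAut.apply_inv_self, mul_inv_cancel, lam_one hlam] at h
  exact eq_inv_of_mul_eq_one_right h.symm

/-- The skew brace `a ∘ b = a * lam a b` attached to a gamma function, that is, a map `lam` to the
automorphism group with `lam (a ∘ b) = lam a * lam b`. -/
def ofLam (lam : A → MulAut A) (hlam : ∀ a b, lam (a * lam a b) = lam a * lam b) :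
    SkewBraceStruct A where
  circ a b := a * lam a b
  circInv a := (lam a)⁻¹ a⁻¹
  circ_assoc a b c := by rw [hlam, MulAut.mul_apply, map_mul, mul_assoc]
  one_circ a := by rw [lam_one hlam, MulAut.one_apply, one_mul]
  circ_one a := by rw [map_one, mul_one]
  circInv_circ a := by rw [lam_inv_apply_inv hlam, ← map_mul, inv_mul_cancel, map_one]
  brace a b c := by rw [map_mul]; group

theorem IsAut.exists_mulAut {hlam : ∀ a b, lam (a * lam a b) = lam a * lam b} {f : A → A}
    (hf : (ofLam lam hlam).IsAut f) :
    ∃ e : MulAut A, ⇑e = f ∧ ∀ a b, e (lam a b) = lam (e a) (e b) := by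
  obtain ⟨hbij, hmul, hcirc⟩ := hf
  refine ⟨MulEquiv.ofBijective (MonoidHom.mk' f hmul) hbij, rfl, fun a b => ?_⟩
  have h : f (a * lam a b) = f a * lam (f a) (f b) := hcirc a b
  rw [hmul] at h
  exact mul_left_cancel h

end SkewBraceStruct

/-- The Heisenberg group of unitriangular matrices `[[1, a, c], [0, 1, b], [0, 0, 1]]` over `R`,
extended by a sign acting as `(a, b, c) ↦ (a, ± b, ± c)`. The quadruple `(a, b, c, s)` stands for
the matrix followed by the sign. -/
@[ext]
structure SignedHeisenberg (R : Type*) where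
  a : R
  b : R
  c : R
  sign : ℤˣ

namespace SignedHeisenberg

theorem natCard (R : Type*) : Nat.card (SignedHeisenberg R) = 2 * Nat.card R ^ 3 := by
  let coords : SignedHeisenberg R ≃ ℤˣ × R × R × R :=
    { toFun x := (x.sign, x.a, x.b, x.c)
      invFun y := ⟨y.2.1, y.2.2.1, y.2.2.2, y.1⟩ }
  rw [Nat.card_congr coords, Nat.card_prod, Nat.card_prod, Nat.card_prod,
    Nat.card_eq_fintype_card (α := ℤˣ), Fintype.card_units_int]
  ring

variable {R : Type*} [CommRing R]

theorem intCast_sign_mul_self (s : ℤˣ) : ((s : ℤ) : R) * ((s : ℤ) : R) = 1 := by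
  rw [← Int.cast_mul, ← Units.val_mul, Int.units_mul_self, Units.val_one, Int.cast_one]

@[simps]
instance : One (SignedHeisenberg R) where
  one := ⟨0, 0, 0, 1⟩

@[simps]
instance : Mul (SignedHeisenberg R) where
  mul x y :=
    ⟨x.a + y.a, x.b + (x.sign : ℤ) * y.b, x.c + (x.sign : ℤ) * (y.c + x.a * y.b), x.sign * y.sign⟩

@[simps]
instance : Inv (SignedHeisenberg R) where
  inv x := ⟨-x.a, -((x.sign : ℤ) * x.b), (x.sign : ℤ) * (x.a * x.b - x.c), x.sign⟩

instance : Group (SignedHeisenberg R) :=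
  Group.ofLeftAxioms
    (fun x y z => by
      ext <;> simp only [mul_a, mul_b, mul_c, mul_sign, mul_assoc, Units.val_mul, Int.cast_mul] <;>
        ring)
    (fun x => by ext <;> simp)
    (fun x => by
      ext
      case c => simp only [mul_c, inv_a, inv_c, inv_sign, one_c]; ring
      all_goals simp)

/-- The automorphism `(a, b, c, t) ↦ (s a, s b, c, t)` attached to a sign `s`, one factor of
`lambda`. -/
def reflect : ℤˣ →* MulAut (SignedHeisenberg R) where
  toFun s :=
    { toFun x := ⟨(s : ℤ) * x.a, (s : ℤ) * x.b, x.c, x.sign⟩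
      invFun x := ⟨(s : ℤ) * x.a, (s : ℤ) * x.b, x.c, x.sign⟩
      left_inv x := by ext <;> simp [← mul_assoc, intCast_sign_mul_self]
      right_inv x := by ext <;> simp [← mul_assoc, intCast_sign_mul_self]
      map_mul' x y := by
        have hs := intCast_sign_mul_self (R := R) s
        ext <;> simp only [mul_a, mul_b, mul_c, mul_sign] <;> grind }
  map_one' := by ext <;> simp
  map_mul' s t := by ext <;> simp [mul_assoc]

@[simp]
theorem reflect_apply (s : ℤˣ) (x : SignedHeisenberg R) :
    reflect s x = ⟨(s : ℤ) * x.a, (s : ℤ) * x.b, x.c, x.sign⟩ :=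
  rfl

/-- The conjugating element in `lambda x`. It ranges over the abelian subgroup of elements
`(β, β, γ, 1)`. -/
def twist (x : SignedHeisenberg R) : SignedHeisenberg R :=
  ⟨-((x.sign : ℤ) * x.b), -((x.sign : ℤ) * x.b), x.b - (x.sign : ℤ) * (x.c - x.a * x.b), 1⟩

/-- The gamma function of the skew brace: `reflect` by the sign of `x`, then conjugation by
`twist x`. -/
def lambda (x : SignedHeisenberg R) : MulAut (SignedHeisenberg R) :=
  MulAut.conj (twist x) * reflect x.sign

theorem lambda_apply (x y : SignedHeisenberg R) :
    lambda x y =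
      ⟨(x.sign : ℤ) * y.a,
        (x.sign : ℤ) * (y.b - (1 - (y.sign : ℤ)) * x.b),
        y.c + (1 - (y.sign : ℤ)) * (x.b - (x.sign : ℤ) * (x.c - x.a * x.b))
          - x.b * y.b + (y.sign : ℤ) * x.b * y.a,
        y.sign⟩ := by
  have hx := intCast_sign_mul_self (R := R) x.sign
  ext <;> simp only [lambda, twist, MulAut.mul_apply, MulAut.conj_apply, reflect_apply, mul_a,
    mul_b, mul_c, mul_sign, inv_a, inv_b, inv_c, inv_sign, Units.val_one, Int.cast_one] <;> grind

theorem twist_mul_lambda_apply (x y : SignedHeisenberg R) :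
    twist (x * lambda x y) = twist x * reflect x.sign (twist y) := by
  have hx := intCast_sign_mul_self (R := R) x.sign
  have hy := intCast_sign_mul_self (R := R) y.sign
  ext <;> simp only [lambda_apply, twist, reflect_apply, mul_a, mul_b, mul_c, mul_sign,
    Units.val_mul, Units.val_one, Int.cast_mul, Int.cast_one] <;> grind

theorem lambda_mul_lambda_apply (x y : SignedHeisenberg R) :
    lambda (x * lambda x y) = lambda x * lambda y := by
  have hconj (g : SignedHeisenberg R) (φ : MulAut (SignedHeisenberg R)) :
      MulAut.conj (φ g) = φ * MulAut.conj g * φ⁻¹ := by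
    ext1 h
    simp
  have hsign : (x * lambda x y).sign = x.sign * y.sign := by simp [lambda_apply]
  rw [lambda, twist_mul_lambda_apply, hsign, map_mul, map_mul, hconj, lambda, lambda]
  group

/-- The sign change `(0, 0, 0, -1)`, an element of order two fixed by all automorphisms of the skew
brace when `2` is invertible. -/
@[simps]
def involution : SignedHeisenberg R :=
  ⟨0, 0, 0, -1⟩

theorem lambda_involution_apply (y : SignedHeisenberg R) :
    lambda involution y = ⟨-y.a, -y.b, y.c, y.sign⟩ := by
  simp [lambda_apply]

variable (R) in
/-- The skew brace on the signed Heisenberg group with gamma function `lambda`. -/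
def skewBrace : SkewBraceStruct (SignedHeisenberg R) :=
  .ofLam lambda lambda_mul_lambda_apply

/-- Compatibility of a group automorphism with `lambda`, equivalently with the circle operation of
`skewBrace R`. -/
def CommutesWithLambda (e : MulAut (SignedHeisenberg R)) : Prop :=
  ∀ x y, e (lambda x y) = lambda (e x) (e y)

section Automorphism

variable [Invertible (2 : R)] (e : MulAut (SignedHeisenberg R))

theorem eq_zero_of_add_self_eq_zero {r : R} (h : r + r = 0) : r = 0 := by
  rwa [← two_mul, (isUnit_of_invertible (2 : R)).mul_right_eq_zero] at h

theorem isSquare_of_sign_eq_one {x : SignedHeisenberg R} (hx : x.sign = 1) : IsSquare x := by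
  have h2 := invOf_mul_self (2 : R)
  refine ⟨⟨⅟2 * x.a, ⅟2 * x.b, ⅟2 * (x.c - ⅟2 * x.a * (⅟2 * x.b)), 1⟩, ?_⟩
  ext <;> simp only [hx, mul_a, mul_b, mul_c, mul_sign, mul_one, Units.val_one, Int.cast_one] <;>
    grind

theorem sign_apply_of_sign_eq_one {x : SignedHeisenberg R} (hx : x.sign = 1) :
    (e x).sign = 1 := by
  obtain ⟨y, rfl⟩ := isSquare_of_sign_eq_one hx
  simp

theorem sign_apply (x : SignedHeisenberg R) : (e x).sign = x.sign := by
  obtain hx | hx := Int.units_eq_one_or x.sign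
  · rw [hx, sign_apply_of_sign_eq_one e hx]
  · have hex : (e x).sign ≠ 1 := fun h => by
      have := sign_apply_of_sign_eq_one e.symm h
      simp [hx] at this
    rw [hx, Int.units_ne_iff_eq_neg.mp hex]

theorem a_apply_eq_zero {x : SignedHeisenberg R} (hx : x.a = 0) : (e x).a = 0 := by
  apply eq_zero_of_add_self_eq_zero
  obtain hs | hs := Int.units_eq_one_or x.sign
  · have hinv : x * involution * x = involution := by ext <;> simp [hx, hs]
    have h := congrArg (fun y => (e y).a) hinv
    simp only [map_mul, mul_a] at h
    linear_combination h
  · have hinv : x * x = 1 := by ext <;> simp [hx, hs]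
    simpa using congrArg (fun y => (e y).a) hinv

theorem a_apply (x : SignedHeisenberg R) : (e x).a = (e ⟨x.a, 0, 0, 1⟩).a := by
  have hx : x = ⟨0, x.b, x.c, x.sign⟩ * ⟨x.a, 0, 0, 1⟩ := by ext <;> simp
  conv_lhs => rw [hx, map_mul, mul_a, a_apply_eq_zero e rfl, zero_add]

theorem b_eq_zero_and_c_eq_zero_of_lambda_apply_eq_self {x y : SignedHeisenberg R}
    (hx : x.sign = 1) (hya : y.a = 0) (hy : y.sign = -1) (h : lambda x y = y) :
    x.b = 0 ∧ x.c = 0 := by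
  have hb : x.b = 0 := by
    apply eq_zero_of_add_self_eq_zero
    simpa [lambda_apply, hx, hy, add_mul] using congrArg SignedHeisenberg.b h
  have hc : x.c = 0 := by
    rw [← neg_eq_zero]
    apply eq_zero_of_add_self_eq_zero
    simpa [lambda_apply, hx, hy, hya, hb, add_mul] using congrArg SignedHeisenberg.c h
  exact ⟨hb, hc⟩

variable {e}

theorem apply_a_axis (he : CommutesWithLambda e) (a : R) :
    e ⟨a, 0, 0, 1⟩ = ⟨(e ⟨a, 0, 0, 1⟩).a, 0, 0, 1⟩ := by
  have hfix : lambda ⟨a, 0, 0, 1⟩ involution = involution := by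
    ext <;> simp [lambda_apply]
  have hefix := he ⟨a, 0, 0, 1⟩ involution
  rw [hfix] at hefix
  obtain ⟨hb, hc⟩ := b_eq_zero_and_c_eq_zero_of_lambda_apply_eq_self (sign_apply e _)
    (a_apply_eq_zero e rfl) (sign_apply e _) hefix.symm
  ext <;> simp [hb, hc, sign_apply]

theorem exists_apply_a_axis_eq (he : CommutesWithLambda e) (a : R) :
    ∃ a' : R, e ⟨a', 0, 0, 1⟩ = ⟨a, 0, 0, 1⟩ := by
  obtain ⟨x, hx⟩ := e.surjective ⟨a, 0, 0, 1⟩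
  exact ⟨x.a, by rw [apply_a_axis he, ← a_apply, hx]⟩

theorem apply_involution (he : CommutesWithLambda e) : e involution = involution := by
  have ha : (e involution).a = 0 := a_apply_eq_zero e rfl
  have hs : (e involution).sign = -1 := sign_apply e involution
  have hb : (e involution).b = 0 := by
    obtain ⟨a, ha⟩ := exists_apply_a_axis_eq he 1
    have hcomm : (⟨a, 0, 0, 1⟩ : SignedHeisenberg R) * involution = involution * ⟨a, 0, 0, 1⟩ := by
      ext <;> simp
    have hecomm := congrArg e hcomm
    rw [map_mul, map_mul, ha] at hecomm
    simpa using congrArg SignedHeisenberg.c hecomm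
  have hc : (e involution).c = 0 := by
    have hfix : lambda involution (involution : SignedHeisenberg R) = involution := by
      ext <;> simp [lambda_involution_apply]
    have hefix := he involution involution
    rw [hfix] at hefix
    apply eq_zero_of_add_self_eq_zero
    simpa [lambda_apply, ha, hb, hs, add_mul] using congrArg SignedHeisenberg.c hefix
  ext <;> simp [ha, hb, hc, hs]

theorem apply_b_axis (he : CommutesWithLambda e) (b : R) :
    e ⟨0, b, 0, 1⟩ = ⟨0, (e ⟨0, b, 0, 1⟩).b, 0, 1⟩ := by
  have hinv : lambda involution ⟨0, b, 0, 1⟩ = (⟨0, b, 0, 1⟩ : SignedHeisenberg R)⁻¹ := by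
    ext <;> simp [lambda_involution_apply]
  have h := he involution ⟨0, b, 0, 1⟩
  rw [hinv, map_inv, apply_involution he, lambda_involution_apply] at h
  have ha : (e ⟨0, b, 0, 1⟩).a = 0 := a_apply_eq_zero e rfl
  have hc : (e ⟨0, b, 0, 1⟩).c = 0 := by
    apply eq_zero_of_add_self_eq_zero
    rw [← neg_eq_iff_add_eq_zero]
    simpa [ha, sign_apply] using congrArg SignedHeisenberg.c h
  ext <;> simp [ha, hc, sign_apply]

theorem apply_c_axis (he : CommutesWithLambda e) (c : R) :
    e ⟨0, 0, c, 1⟩ = ⟨0, 0, (e ⟨0, 0, c, 1⟩).c, 1⟩ := by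
  have hfix : lambda involution (⟨0, 0, c, 1⟩ : SignedHeisenberg R) = ⟨0, 0, c, 1⟩ := by
    simp [lambda_involution_apply]
  have h := he involution ⟨0, 0, c, 1⟩
  rw [hfix, apply_involution he, lambda_involution_apply] at h
  have ha : (e ⟨0, 0, c, 1⟩).a = 0 := a_apply_eq_zero e rfl
  have hb : (e ⟨0, 0, c, 1⟩).b = 0 :=
    eq_zero_of_add_self_eq_zero (eq_neg_iff_add_eq_zero.mp (congrArg SignedHeisenberg.b h))
  ext <;> simp [ha, hb, sign_apply]

theorem apply_sign_axis (he : CommutesWithLambda e) (s : ℤˣ) :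
    e ⟨0, 0, 0, s⟩ = ⟨0, 0, 0, s⟩ := by
  obtain rfl | rfl := Int.units_eq_one_or s
  · exact map_one e
  · exact apply_involution he

theorem exists_addMonoidHom_apply_eq (he : CommutesWithLambda e) :
    ∃ φ ψ χ : R →+ R, ∀ x, e x = ⟨φ x.a, ψ x.b, χ x.c, x.sign⟩ := by
  let φ : R →+ R := AddMonoidHom.mk' (fun a => (e ⟨a, 0, 0, 1⟩).a) fun a a' => by
    have h : (⟨a + a', 0, 0, 1⟩ : SignedHeisenberg R) = ⟨a, 0, 0, 1⟩ * ⟨a', 0, 0, 1⟩ := by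
      ext <;> simp
    rw [h, map_mul, mul_a]
  let ψ : R →+ R := AddMonoidHom.mk' (fun b => (e ⟨0, b, 0, 1⟩).b) fun b b' => by
    have h : (⟨0, b + b', 0, 1⟩ : SignedHeisenberg R) = ⟨0, b, 0, 1⟩ * ⟨0, b', 0, 1⟩ := by
      ext <;> simp
    simp [h, sign_apply]
  let χ : R →+ R := AddMonoidHom.mk' (fun c => (e ⟨0, 0, c, 1⟩).c) fun c c' => by
    have h : (⟨0, 0, c + c', 1⟩ : SignedHeisenberg R) = ⟨0, 0, c, 1⟩ * ⟨0, 0, c', 1⟩ := by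
      ext <;> simp
    simp [h, sign_apply, a_apply_eq_zero]
  refine ⟨φ, ψ, χ, fun x => ?_⟩
  have hx : x = ⟨0, x.b, 0, 1⟩ * ⟨0, 0, x.c, 1⟩ * ⟨x.a, 0, 0, 1⟩ * ⟨0, 0, 0, x.sign⟩ := by
    ext <;> simp
  conv_lhs => rw [hx, map_mul, map_mul, map_mul, apply_a_axis he, apply_b_axis he, apply_c_axis he,
    apply_sign_axis he]
  ext <;> simp [φ, ψ, χ]

theorem exists_ringHom_apply_eq (he : CommutesWithLambda e) :
    ∃ ρ : R →+* R, ∀ x, e x = ⟨ρ x.a, ρ x.b, ρ x.c, x.sign⟩ := by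
  obtain ⟨φ, ψ, χ, h⟩ := exists_addMonoidHom_apply_eq he
  have hχψ (r : R) : χ r = ψ r := by
    have hdouble (b : R) : χ (b + b) = ψ (b + b) := by
      simpa [h, lambda_apply, add_mul] using
        congrArg SignedHeisenberg.c (he ⟨0, b, 0, 1⟩ involution)
    have hr : ⅟2 * r + ⅟2 * r = r := by rw [← two_mul, mul_invOf_cancel_left]
    rw [← hr, hdouble]
  have hψφ (b a : R) : ψ (b * a) = ψ b * φ a := by
    simpa [h, lambda_apply, hχψ] using
      congrArg SignedHeisenberg.c (he ⟨0, b, 0, 1⟩ ⟨a, 0, 0, 1⟩)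
  have hψψ (b b' : R) : ψ (b * b') = ψ b * ψ b' := by
    simpa [h, lambda_apply, hχψ] using
      congrArg SignedHeisenberg.c (he ⟨0, b, 0, 1⟩ ⟨0, b', 0, 1⟩)
  have hψ_one : ψ 1 = 1 := by
    obtain ⟨x, hx⟩ := e.surjective ⟨0, 1, 0, 1⟩
    have hxb : ψ x.b = 1 := by simpa [h] using congrArg SignedHeisenberg.b hx
    simpa [hxb] using (hψψ x.b 1).symm
  have hφψ (r : R) : φ r = ψ r := by simpa [hψ_one] using (hψφ 1 r).symm
  exact ⟨{ ψ with map_one' := hψ_one, map_mul' := hψψ }, fun x => by rw [h, hφψ, hχψ]; rfl⟩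

end Automorphism

theorem eq_id_of_isAut {n : ℕ} (hn : Odd n)
    {f : SignedHeisenberg (ZMod n) → SignedHeisenberg (ZMod n)}
    (hf : (skewBrace (ZMod n)).IsAut f) : f = id := by
  have h2 : IsUnit (2 : ZMod n) := by
    exact_mod_cast (ZMod.isUnit_iff_coprime 2 n).mpr (Nat.coprime_two_left.mpr hn)
  have := h2.invertible
  obtain ⟨e, rfl, he⟩ := hf.exists_mulAut
  obtain ⟨ρ, hρ⟩ := exists_ringHom_apply_eq he
  funext x
  rw [hρ, RingHom.ext_zmod ρ (RingHom.id _)]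
  rfl

end SignedHeisenberg

theorem exists_skewBrace_order_two_p_cubed_trivial_aut_general (n : ℕ) (hn : Odd n) :
    ∃ (A : Type) (instA : Group A) (S : @SkewBraceStruct A instA),
      Nat.card A = 2 * n ^ 3 ∧
      ∀ f : A → A, @SkewBraceStruct.IsAut A instA S f → f = id :=
  ⟨SignedHeisenberg (ZMod n), inferInstance, SignedHeisenberg.skewBrace (ZMod n),
    by rw [SignedHeisenberg.natCard, Nat.card_zmod],
    fun _ hf => SignedHeisenberg.eq_id_of_isAut hn hf⟩

/-- For every odd prime `p`, there exists a skew brace of order `2 * p ^ 3` whose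
automorphism group is trivial. -/
theorem exists_skewBrace_order_two_p_cubed_trivial_aut (p : ℕ) (hp : p.Prime) (hodd : Odd p) :
    ∃ (A : Type) (instA : Group A) (S : @SkewBraceStruct A instA),
      Nat.card A = 2 * p ^ 3 ∧
      ∀ f : A → A, @SkewBraceStruct.IsAut A instA S f → f = id :=
  exists_skewBrace_order_two_p_cubed_trivial_aut_general p hodd
end
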